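/- Let k ⊂ L be a finite Galois field extension. Then k ⊂ L is catenarian (all maximal chains of intermediate fields from k to L have the same length) if and only if the lattice [k,L] of intermediate fields is supersolvable. -/

import Mathlib

/-!
The Galois correspondence is an anti-isomorphism onto the subgroup lattice of the Galois group `G`,
and both properties are self-dual, so this is a statement about the subgroup lattice of `G`.

If that lattice is supersolvable, any saturated chain generates together with the distinguished
chain a distributive lattice in which both are still saturated, and Jordan–Hölder compares them.

Conversely (Iwasawa), suppose that the lattice is catenarian, a property inherited by subgroups and
quotients. A nonsolvable `G` of minimal order would be simple, with a normal `q`-complement in every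
proper subgroup, `q` being the smallest prime divisor of `|G|`. By Alperin's fusion argument a Sylow
`q`-subgroup would then control fusion in `G`, so that `G` would have a proper derived subgroup by
the focal subgroup theorem. Hence `G` is solvable and has a saturated chain with one step for each
prime factor of `|G|`; all saturated chains being this long, all covering pairs have prime index.
Then the Sylow subgroup for the largest prime is normal, and a minimal normal subgroup inside its
center has prime order, which yields a saturated chain of normal subgroups. These are modular
elements of the lattice, and for a chain `c 0 ≤ ⋯ ≤ c n` of modular elements and a decreasing
sequence `f` the join of the `c (i + 1) ⊓ f i` is the meet of the `c i ⊔ f i`. Such elements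
therefore form a distributive lattice.
-/

/-- A maximal chain of length `n` from `T` to `U`: each step is a covering. -/
def IsMaxChainFromTo {α : Type*} [PartialOrder α] (T U : α) (n : ℕ)
    (c : Fin (n + 1) → α) : Prop :=
  c 0 = T ∧ c (Fin.last n) = U ∧ ∀ i : Fin n, c i.castSucc ⋖ c i.succ

/-- The subextension determined by `T ≤ U` is catenarian: all maximal chains from
`T` to `U` have the same length. -/
def IsCatenarianFromTo {α : Type*} [PartialOrder α] (T U : α) : Prop :=
  ∀ (n m : ℕ) (c : Fin (n + 1) → α) (d : Fin (m + 1) → α),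
    IsMaxChainFromTo T U n c → IsMaxChainFromTo T U m d → n = m

/-- The extension `R ⊆ S` has FCP: every chain of `R`-subalgebras of `S` is finite. -/
def IsFCPExt (R S : Type*) [CommRing R] [CommRing S] [Algebra R S] : Prop :=
  ∀ C : Set (Subalgebra R S), IsChain (· ≤ ·) C → C.Finite

/-- The extension `R ⊆ S` is catenarian. -/
def IsCatenarianExt (R S : Type*) [CommRing R] [CommRing S] [Algebra R S] : Prop :=
  IsCatenarianFromTo (⊥ : Subalgebra R S) ⊤

/-- The length `ℓ[T,U]`: the supremum of lengths of chains from `T` to `U`. -/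
noncomputable def extLength {α : Type*} [PartialOrder α] (T U : α) : ℕ :=
  sSup {n | ∃ c : Fin (n + 1) → α, StrictMono c ∧ c 0 = T ∧ c (Fin.last n) = U}

/-- The sublattice generated by a set: the smallest set containing it and closed
under `⊔` and `⊓`. -/
inductive latticeGen {α : Type*} [Lattice α] (s : Set α) : α → Prop
  | base {x : α} : x ∈ s → latticeGen s x
  | sup {x y : α} : latticeGen s x → latticeGen s y → latticeGen s (x ⊔ y)
  | inf {x y : α} : latticeGen s x → latticeGen s y → latticeGen s (x ⊓ y)

/-- A finite lattice is supersolvable: it has a maximal chain `C` such that for every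
chain `D`, the sublattice generated by `C ∪ D` is distributive. -/
def IsSupersolvableLattice (α : Type*) [Lattice α] : Prop :=
  ∃ C : Set α, IsMaxChain (· ≤ ·) C ∧
    ∀ D : Set α, IsChain (· ≤ ·) D →
      ∀ x y z : α, latticeGen (C ∪ D) x → latticeGen (C ∪ D) y →
        latticeGen (C ∪ D) z → x ⊓ (y ⊔ z) = (x ⊓ y) ⊔ (x ⊓ z)

section Chains

variable {α β : Type*} [PartialOrder α] [PartialOrder β]

/-- A finite saturated chain of a partial order: every term covers the previous one. -/
abbrev CovBySeries (α : Type*) [PartialOrder α] := RelSeries {(a, b) : α × α | a ⋖ b}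

theorem exists_covBySeries_of_le [WellFoundedLT α] [WellFoundedGT α] {a b : α} (h : a ≤ b) :
    ∃ s : CovBySeries α, s.head = a ∧ s.last = b := by
  obtain ⟨c, hc, n, hn, hcov⟩ := exists_covBy_seq_of_wellFoundedLT_wellFoundedGT_of_le h
  exact ⟨⟨n, fun i => c i, fun i => hcov i i.2⟩, hc, hn⟩

theorem exists_covBySeries_forall_mem [OrderTop α] [WellFoundedGT α] {p : α → Prop}
    (hp : ∀ a, p a → a ≠ ⊤ → ∃ b, a ⋖ b ∧ p b) {a : α} (ha : p a) :
    ∃ s : CovBySeries α, s.head = a ∧ s.last = ⊤ ∧ ∀ x ∈ s, p x := by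
  induction a using WellFoundedGT.induction with
  | ind a ih =>
    by_cases hat : a = ⊤
    · refine ⟨RelSeries.singleton _ a, rfl, hat, ?_⟩
      rintro _ ⟨i, rfl⟩
      exact ha
    obtain ⟨b, hab, hb⟩ := hp a ha hat
    obtain ⟨s, rfl, hlast, hs⟩ := ih b hab.lt hb
    refine ⟨s.cons a hab, rfl, by rw [RelSeries.last_cons, hlast], fun x hx => ?_⟩
    rw [← RelSeries.mem_toList, RelSeries.toList_cons, List.mem_cons, RelSeries.mem_toList] at hx
    exact hx.elim (· ▸ ha) (hs x)

theorem CovBySeries.monotone (s : CovBySeries α) : Monotone s :=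
  Fin.monotone_iff_le_succ.2 fun i => CovBy.le (s.step i)

theorem CovBySeries.exists_map_eq {f : α ↪o β} (s : CovBySeries β)
    (hs : ∀ x ∈ s, x ∈ Set.range f) :
    ∃ t : CovBySeries α, t.length = s.length ∧ f t.head = s.head ∧ f t.last = s.last := by
  choose g hg using fun i => hs (s i) ⟨i, rfl⟩
  exact ⟨⟨s.length, g, fun i => CovBy.of_image f (by rw [hg, hg]; exact s.step i)⟩,
    rfl, hg _, hg _⟩

theorem CovBySeries.add_length_le {ρ : α → ℕ} (hρ : StrictMono ρ) (s : CovBySeries α) :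
    ρ s.head + s.length ≤ ρ s.last :=
  (LTSeries.map (s.ofLE fun _ h => CovBy.lt h) ρ hρ).head_add_length_le_nat

theorem isCatenarianFromTo_iff {T U : α} :
    IsCatenarianFromTo T U ↔ ∀ s t : CovBySeries α, s.head = T → s.last = U →
      t.head = T → t.last = U → s.length = t.length :=
  ⟨fun h s t hs hs' ht ht' => h _ _ s t ⟨hs, hs', s.step⟩ ⟨ht, ht', t.step⟩,
    fun h n m c d hc hd =>
      h ⟨n, c, hc.2.2⟩ ⟨m, d, hd.2.2⟩ hc.1 hc.2.1 hd.1 hd.2.1⟩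

theorem IsCatenarianFromTo.of_map {f : α → β} (hf : ∀ a b, a ⋖ b → f a ⋖ f b) {T U : α}
    (h : IsCatenarianFromTo (f T) (f U)) : IsCatenarianFromTo T U :=
  fun n m c d hc hd => h n m (f ∘ c) (f ∘ d)
    ⟨congrArg f hc.1, congrArg f hc.2.1, fun i => hf _ _ (hc.2.2 i)⟩
    ⟨congrArg f hd.1, congrArg f hd.2.1, fun i => hf _ _ (hd.2.2 i)⟩

theorem IsCatenarianFromTo.of_map_anti {f : α → β} (hf : ∀ a b, a ⋖ b → f b ⋖ f a) {T U : α}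
    (h : IsCatenarianFromTo (f U) (f T)) : IsCatenarianFromTo T U := by
  have reverse {n : ℕ} {c : Fin (n + 1) → α} (hc : IsMaxChainFromTo T U n c) :
      IsMaxChainFromTo (f U) (f T) n fun i => f (c i.rev) := by
    refine ⟨?_, ?_, fun i => ?_⟩
    · simp only [Fin.rev_zero, hc.2.1]
    · simp only [Fin.rev_last, hc.1]
    · simpa only [Fin.rev_castSucc, Fin.rev_succ] using hf _ _ (hc.2.2 i.rev)
  exact fun n m c d hc hd => h n m _ _ (reverse hc) (reverse hd)

theorem isCatenarianFromTo_bot_top_iff_of_dual [BoundedOrder α] [BoundedOrder β] (e : α ≃o βᵒᵈ) :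
    IsCatenarianFromTo (⊥ : α) ⊤ ↔ IsCatenarianFromTo (⊥ : β) ⊤ := by
  constructor <;> intro h
  · refine .of_map_anti (f := fun b => e.symm (OrderDual.toDual b))
      (fun _ _ hab => (apply_covBy_apply_iff e.symm).2 hab.toDual) ?_
    rwa [OrderDual.toDual_top, OrderDual.toDual_bot, map_bot, map_top]
  · refine .of_map_anti (f := fun a => OrderDual.ofDual (e a))
      (fun _ _ hab => ((apply_covBy_apply_iff e).2 hab).ofDual) ?_
    rwa [map_bot, map_top, OrderDual.ofDual_top, OrderDual.ofDual_bot]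

theorem IsCatenarianFromTo.subinterval [WellFoundedLT α] [WellFoundedGT α] {T U a b : α}
    (h : IsCatenarianFromTo T U) (hTa : T ≤ a) (hbU : b ≤ U) : IsCatenarianFromTo a b := by
  obtain ⟨p, hpT, rfl⟩ := exists_covBySeries_of_le hTa
  obtain ⟨q, rfl, hqU⟩ := exists_covBySeries_of_le hbU
  rw [isCatenarianFromTo_iff] at h ⊢
  intro s t hs hs' ht ht'
  have := h ((p.smash s hs.symm).smash q (by rwa [RelSeries.last_smash]))
    ((p.smash t ht.symm).smash q (by rwa [RelSeries.last_smash]))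
    (by simpa only [RelSeries.head_smash]) (by simpa only [RelSeries.last_smash])
    (by simpa only [RelSeries.head_smash]) (by simpa only [RelSeries.last_smash])
  simp only [RelSeries.smash_length] at this
  omega

/-- Each step of a saturated chain increases `ρ` by at least one; as a saturated chain through
`a ⋖ b` has the same length as `s`, none of its steps can increase `ρ` by more. -/
theorem IsCatenarianFromTo.eq_add_one_of_covBy [BoundedOrder α] [WellFoundedLT α]
    [WellFoundedGT α] (h : IsCatenarianFromTo (⊥ : α) ⊤) {ρ : α → ℕ} (hρ : StrictMono ρ)
    {s : CovBySeries α} (hbot : s.head = ⊥) (htop : s.last = ⊤) (hs : ρ ⊥ + s.length = ρ ⊤)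
    {a b : α} (hab : a ⋖ b) : ρ b = ρ a + 1 := by
  obtain ⟨p, hp, rfl⟩ := exists_covBySeries_of_le (bot_le : ⊥ ≤ a)
  obtain ⟨q, rfl, hq⟩ := exists_covBySeries_of_le (le_top : b ≤ ⊤)
  have hlen := isCatenarianFromTo_iff.1 h s (p.append q hab) hbot htop
    (by rw [RelSeries.head_append, hp]) (by rw [RelSeries.last_append, hq])
  simp only [RelSeries.append_length] at hlen
  have hlt := hρ hab.lt
  have hle_p := CovBySeries.add_length_le hρ p
  have hle_q := CovBySeries.add_length_le hρ q
  rw [hp] at hle_p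
  rw [hq] at hle_q
  omega

end Chains

section Supersolvable

variable {α : Type*} [Lattice α]

theorem latticeGen.mem_range {δ : Type*} [Lattice δ] {φ : LatticeHom δ α} {s : Set α} {x : α}
    (hx : latticeGen s x) (hs : s ⊆ Set.range φ) : x ∈ Set.range φ := by
  induction hx with
  | base hx => exact hs hx
  | sup _ _ hx hy =>
    obtain ⟨⟨u, rfl⟩, v, rfl⟩ := And.intro hx hy
    exact ⟨u ⊔ v, map_sup φ u v⟩
  | inf _ _ hx hy =>
    obtain ⟨⟨u, rfl⟩, v, rfl⟩ := And.intro hx hy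
    exact ⟨u ⊓ v, map_inf φ u v⟩

/-- Distributive homomorphic images are easier to transport than generated sublattices. -/
theorem IsSupersolvableLattice.of_exists_latticeHom {C : Set α} (hC : IsMaxChain (· ≤ ·) C)
    (h : ∀ D : Set α, IsChain (· ≤ ·) D → ∃ (δ : Type*) (_ : DistribLattice δ)
      (φ : LatticeHom δ α), C ∪ D ⊆ Set.range φ) : IsSupersolvableLattice α := by
  refine ⟨C, hC, fun D hD x y z hx hy hz => ?_⟩
  obtain ⟨δ, _, φ, hφ⟩ := h D hD
  obtain ⟨u, rfl⟩ := hx.mem_range hφ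
  obtain ⟨v, rfl⟩ := hy.mem_range hφ
  obtain ⟨w, rfl⟩ := hz.mem_range hφ
  simp only [← map_sup, ← map_inf, inf_sup_left]

theorem IsSupersolvableLattice.exists_latticeHom.{u} {α : Type u} [Lattice α]
    (h : IsSupersolvableLattice α) : ∃ C : Set α, IsMaxChain (· ≤ ·) C ∧
      ∀ D : Set α, IsChain (· ≤ ·) D → ∃ (δ : Type u) (_ : DistribLattice δ) (φ : LatticeHom δ α),
        Function.Injective φ ∧ C ∪ D ⊆ Set.range φ := by
  obtain ⟨C, hC, hdistrib⟩ := h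
  refine ⟨C, hC, fun D hD => ?_⟩
  let S : Sublattice α := ⟨{x | latticeGen (C ∪ D) x}, fun _ hx _ hy => .sup hx hy,
    fun _ hx _ hy => .inf hx hy⟩
  exact ⟨S, .ofInfSupLe fun x y z => (hdistrib D hD x y z x.2 y.2 z.2).le, S.subtype,
    Subtype.val_injective, fun x hx => ⟨⟨x, .base hx⟩, rfl⟩⟩

theorem IsSupersolvableLattice.of_orderIso {β : Type*} [Lattice β]
    (h : IsSupersolvableLattice β) (e : α ≃o β) : IsSupersolvableLattice α := by
  obtain ⟨C, hC, hφ⟩ := h.exists_latticeHom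
  refine .of_exists_latticeHom (hC.image e.symm) fun D hD => ?_
  obtain ⟨δ, _, φ, -, hrange⟩ := hφ (e '' D) (hD.image e)
  refine ⟨δ, inferInstance, (e.symm : LatticeHom β α).comp φ, ?_⟩
  rw [Set.union_subset_iff, Set.image_subset_iff] at hrange
  have mem_range : ∀ x, e x ∈ Set.range φ → x ∈ Set.range ((e.symm : LatticeHom β α).comp φ) :=
    fun x ⟨d, hd⟩ => ⟨d, e.symm_apply_eq.2 hd⟩
  rintro x (⟨c, hc, rfl⟩ | hx)
  · exact mem_range _ (by rw [e.apply_symm_apply]; exact hrange.1 hc)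
  · exact mem_range x (hrange.2 hx)

theorem IsSupersolvableLattice.dual (h : IsSupersolvableLattice α) :
    IsSupersolvableLattice αᵒᵈ := by
  obtain ⟨C, hC, hφ⟩ := h.exists_latticeHom
  refine .of_exists_latticeHom (C := OrderDual.ofDual ⁻¹' C) hC.symm fun D hD => ?_
  obtain ⟨δ, _, φ, -, hrange⟩ := hφ (OrderDual.toDual ⁻¹' D) hD.symm
  exact ⟨δᵒᵈ, inferInstance, φ.dual, hrange⟩

theorem isSupersolvableLattice_iff_of_dual {β : Type*} [Lattice β] (e : α ≃o βᵒᵈ) :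
    IsSupersolvableLattice α ↔ IsSupersolvableLattice β :=
  ⟨fun h => h.dual.of_orderIso e.dual.symm, fun h => h.dual.of_orderIso e⟩

theorem CovBySeries.length_eq_of_forall_mem_range {δ : Type*} [Lattice δ] [IsModularLattice δ]
    {φ : LatticeHom δ α} (hφ : Function.Injective φ) {s t : CovBySeries α}
    (hs : ∀ x ∈ s, x ∈ Set.range φ) (ht : ∀ x ∈ t, x ∈ Set.range φ) (hhead : s.head = t.head)
    (hlast : s.last = t.last) : s.length = t.length := by
  let f : δ ↪o α := orderEmbeddingOfInjective φ hφ
  obtain ⟨u, hu, hu_head, hu_last⟩ := CovBySeries.exists_map_eq (f := f) s hs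
  obtain ⟨v, hv, hv_head, hv_last⟩ := CovBySeries.exists_map_eq (f := f) t ht
  rw [← hu, ← hv]
  refine (CompositionSeries.jordan_holder (X := δ) u v (f.injective ?_) (f.injective ?_)).length_eq
  · rw [hu_head, hv_head, hhead]
  · rw [hu_last, hv_last, hlast]

theorem CovBySeries.isChain (s : CovBySeries α) : IsChain (· ≤ ·) {x | x ∈ s} := by
  rintro _ ⟨i, rfl⟩ _ ⟨j, rfl⟩ _
  exact (le_total i j).imp (CovBySeries.monotone s ·) (CovBySeries.monotone s ·)

/-- A given saturated chain and a saturated chain in the distinguished maximal chain are both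
saturated in the distributive lattice they generate, where Jordan–Hölder applies. -/
theorem IsSupersolvableLattice.isCatenarianFromTo [BoundedOrder α] [WellFoundedLT α]
    [WellFoundedGT α] (h : IsSupersolvableLattice α) : IsCatenarianFromTo (⊥ : α) ⊤ := by
  obtain ⟨C, hC, hφ⟩ := h.exists_latticeHom
  let F : Flag α := .ofIsMaxChain C hC
  obtain ⟨c, hc_bot, hc_top⟩ := exists_covBySeries_of_le (bot_le : (⊥ : F) ≤ ⊤)
  let t : CovBySeries α := c.map ⟨Subtype.val, fun h => Flag.coe_covBy_coe.2 h⟩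
  suffices key : ∀ s : CovBySeries α, s.head = ⊥ → s.last = ⊤ → s.length = t.length from
    isCatenarianFromTo_iff.2 fun s s' hs hs' hs₁ hs₂ => (key s hs hs').trans (key s' hs₁ hs₂).symm
  intro s hs_bot hs_top
  obtain ⟨δ, _, φ, hinj, hrange⟩ := hφ {x | x ∈ s} (CovBySeries.isChain s)
  refine CovBySeries.length_eq_of_forall_mem_range hinj (fun x hx => hrange (.inr hx)) ?_
    (hs_bot.trans (congrArg Subtype.val hc_bot).symm)
    (hs_top.trans (congrArg Subtype.val hc_top).symm)
  rintro _ ⟨i, rfl⟩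
  exact hrange (.inl (c i).2)

end Supersolvable

section Staircase

/-- An element `c` of a lattice is modular if Dedekind's law holds for every triple in which `c`
takes the place of the middle or of the left term. -/
structure IsModularElement {α : Type*} [Lattice α] (c : α) : Prop where
  sup_inf_assoc_middle : ∀ ⦃a b : α⦄, a ≤ b → (a ⊔ c) ⊓ b = a ⊔ (c ⊓ b)
  sup_inf_assoc_left : ∀ (a : α) ⦃b : α⦄, c ≤ b → (c ⊔ a) ⊓ b = c ⊔ (a ⊓ b)

variable {α : Type*} [Lattice α] [BoundedOrder α] {n : ℕ}

/-- The join of the meets `c (i + 1) ⊓ f i`. The elements of the sublattice generated by two chains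
are of this form, with `c` running through one chain and `f` decreasing in the other. -/
def staircase (c : Fin (n + 1) → α) (f : Fin n → α) : α :=
  Finset.univ.sup fun i => c i.succ ⊓ f i

variable {c : Fin (n + 1) → α} {f g : Fin n → α}

theorem staircase_sup (hfg : ∀ i, f i ≤ g i ∨ g i ≤ f i) :
    staircase c (f ⊔ g) = staircase c f ⊔ staircase c g := by
  refine Eq.trans (Finset.sup_congr rfl fun i _ => ?_) Finset.sup_sup
  rcases hfg i with h | h
  · rw [Pi.sup_apply, sup_eq_right.2 h]
    exact (sup_eq_right.2 (inf_le_inf_left _ h)).symm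
  · rw [Pi.sup_apply, sup_eq_left.2 h]
    exact (sup_eq_left.2 (inf_le_inf_left _ h)).symm

/-- For the inductive step put `I = ⨅ i < r, c i ⊔ f i`. As `f r ≤ I`, Dedekind's law gives
`I ⊓ (c r ⊔ f r) ⊓ c (r + 1) = I ⊓ (c r ⊔ (f r ⊓ c (r + 1))) = (I ⊓ c r) ⊔ (f r ⊓ c (r + 1))`. -/
theorem staircase_eq_inf (hc : Monotone c) (hbot : c 0 = ⊥) (hmod : ∀ i, IsModularElement (c i))
    (hf : Antitone f) :
    staircase c f = (Finset.univ.inf fun i => c i.castSucc ⊔ f i) ⊓ c (Fin.last n) := by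
  induction n with
  | zero => simpa [staircase] using hbot.symm
  | succ r ih =>
    let I := Finset.univ.inf fun i : Fin r => c i.castSucc.castSucc ⊔ f i.castSucc
    let m := c (Fin.last r).castSucc
    let t := c (Fin.last (r + 1))
    let z := f (Fin.last r)
    have hmt : m ≤ t := hc (Fin.le_last _)
    have hzI : z ⊓ t ≤ I := Finset.le_inf fun i _ =>
      inf_le_left.trans ((hf (Fin.le_last _)).trans le_sup_right)
    have hprev : staircase (c ∘ Fin.castSucc) (f ∘ Fin.castSucc) = I ⊓ m :=
      ih (hc.comp Fin.strictMono_castSucc.monotone) hbot (fun i => hmod _)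
        (hf.comp_monotone Fin.strictMono_castSucc.monotone)
    calc staircase c f
        = (t ⊓ z) ⊔ staircase (c ∘ Fin.castSucc) (f ∘ Fin.castSucc) := by
          rw [staircase, Fin.univ_castSuccEmb, Finset.sup_cons, Finset.sup_map]
          rfl
      _ = ((z ⊓ t) ⊔ m) ⊓ I := by
          rw [hprev, (hmod _).sup_inf_assoc_middle hzI, inf_comm t, inf_comm I]
      _ = ((m ⊔ z) ⊓ t) ⊓ I := by rw [(hmod _).sup_inf_assoc_left _ hmt, sup_comm]
      _ = (Finset.univ.inf fun i => c i.castSucc ⊔ f i) ⊓ t := by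
          rw [Fin.univ_castSuccEmb, Finset.inf_cons, Finset.inf_map, inf_right_comm]
          rfl

theorem staircase_eq_inf_of_last_eq_top (hc : Monotone c) (hbot : c 0 = ⊥)
    (htop : c (Fin.last n) = ⊤) (hmod : ∀ i, IsModularElement (c i)) (hf : Antitone f) :
    staircase c f = Finset.univ.inf fun i => c i.castSucc ⊔ f i := by
  rw [staircase_eq_inf hc hbot hmod hf, htop, inf_top_eq]

theorem staircase_inf (hc : Monotone c) (hbot : c 0 = ⊥) (htop : c (Fin.last n) = ⊤)
    (hmod : ∀ i, IsModularElement (c i)) (hf : Antitone f) (hg : Antitone g)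
    (hfg : ∀ i, f i ≤ g i ∨ g i ≤ f i) :
    staircase c (f ⊓ g) = staircase c f ⊓ staircase c g := by
  have eq_inf {h : Fin n → α} := staircase_eq_inf_of_last_eq_top (f := h) hc hbot htop hmod
  rw [eq_inf hf, eq_inf hg, eq_inf (hf.inf hg)]
  refine Eq.trans (Finset.inf_congr rfl fun i _ => ?_) Finset.inf_inf
  rcases hfg i with h | h
  · rw [Pi.inf_apply, inf_eq_left.2 h]
    exact (inf_eq_left.2 (sup_le_sup_left h _)).symm
  · rw [Pi.inf_apply, inf_eq_right.2 h]
    exact (inf_eq_right.2 (sup_le_sup_left h _)).symm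

theorem staircase_eq_of_le_of_le (hc : Monotone c) (hbot : c 0 = ⊥) (htop : c (Fin.last n) = ⊤)
    (hmod : ∀ i, IsModularElement (c i)) (hf : Antitone f) {x : α}
    (hle : ∀ i, c i.succ ⊓ f i ≤ x) (hge : ∀ i, x ≤ c i.castSucc ⊔ f i) : staircase c f = x :=
  le_antisymm (Finset.sup_le fun i _ => hle i) <| by
    rw [staircase_eq_inf_of_last_eq_top hc hbot htop hmod hf]
    exact Finset.le_inf fun i _ => hge i

/-- The sublattice of antitone functions with values in a linear order. -/
def antitoneSublattice (ι β : Type*) [Preorder ι] [LinearOrder β] : Sublattice (ι → β) where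
  carrier := {f | Antitone f}
  supClosed' _ hf _ hg := hf.sup hg
  infClosed' _ hf _ hg := hf.inf hg

/-- The staircases over a fixed chain `c` of modular elements with values in a linear order `β`,
as a homomorphism from a distributive lattice. -/
def staircaseHom (hc : Monotone c) (hbot : c 0 = ⊥) (htop : c (Fin.last n) = ⊤)
    (hmod : ∀ i, IsModularElement (c i)) {β : Type*} [LinearOrder β] {j : β → α}
    (hj : Monotone j) : LatticeHom (antitoneSublattice (Fin n) β) α where
  toFun f := staircase c (j ∘ f.1)
  map_sup' f g :=
    (congrArg (staircase c) (funext fun _ => hj.map_sup _ _)).trans <|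
      staircase_sup fun i => (le_total (f.1 i) (g.1 i)).imp (hj ·) (hj ·)
  map_inf' f g :=
    (congrArg (staircase c) (funext fun _ => hj.map_inf _ _)).trans <|
      staircase_inf hc hbot htop hmod (hj.comp_antitone f.2) (hj.comp_antitone g.2)
        fun i => (le_total (f.1 i) (g.1 i)).imp (hj ·) (hj ·)

theorem subset_range_staircaseHom (hc : Monotone c) (hbot : c 0 = ⊥) (htop : c (Fin.last n) = ⊤)
    (hmod : ∀ i, IsModularElement (c i)) {β : Type*} [LinearOrder β] [BoundedOrder β] {j : β → α}
    (hj : Monotone j) (hj_bot : j ⊥ = ⊥) (hj_top : j ⊤ = ⊤) :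
    Set.range c ∪ Set.range j ⊆ Set.range (staircaseHom hc hbot htop hmod hj) := by
  rintro _ (⟨m, rfl⟩ | ⟨b, rfl⟩)
  · have hf : Antitone fun i : Fin n => if i.castSucc < m then (⊤ : β) else ⊥ := by
      intro a b hab
      by_cases hb : b.castSucc < m
      · simp only [hb, (Fin.castSucc_le_castSucc_iff.2 hab).trans_lt hb, if_true, le_refl]
      · simp only [hb, if_false, bot_le]
    refine ⟨⟨_, hf⟩, staircase_eq_of_le_of_le hc hbot htop hmod (hj.comp_antitone hf) ?_ ?_⟩ <;>
      intro i <;> by_cases hi : i.castSucc < m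
    · simpa [hi, hj_top] using hc (Fin.castSucc_lt_iff_succ_le.1 hi)
    · simp [hi, hj_bot]
    · simp [hi, hj_top]
    · simpa [hi, hj_bot] using hc (not_lt.1 hi)
  · exact ⟨⟨fun _ => b, antitone_const⟩, staircase_eq_of_le_of_le (f := fun _ => j b) hc hbot htop
      hmod antitone_const (fun _ => inf_le_right) fun _ => le_sup_right⟩

theorem IsSupersolvableLattice.of_forall_mem_isModularElement {s : CovBySeries α}
    (hbot : s.head = ⊥) (htop : s.last = ⊤) (hmod : ∀ x ∈ s, IsModularElement x) :
    IsSupersolvableLattice α := by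
  refine .of_exists_latticeHom (C := Set.range s)
    (IsMaxChain.range_fin_of_covBy hbot htop fun i => CovBy.wcovBy (s.step i)) fun D hD => ?_
  obtain ⟨F, hDF⟩ := hD.exists_subset_flag
  classical
  refine ⟨_, inferInstance, staircaseHom (CovBySeries.monotone s) hbot htop
    (fun i => hmod _ ⟨i, rfl⟩) (Subtype.mono_coe (· ∈ F)), ?_⟩
  refine subset_trans (Set.union_subset_union_right _ ?_)
    (subset_range_staircaseHom _ hbot htop _ _ rfl rfl)
  exact hDF.trans Subtype.range_coe.ge

end Staircase

section PrimeCovers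

variable {G G' : Type*} [Group G] [Group G']

/-- Every covering pair `H ⋖ K` of subgroups of `G` has prime index `[K : H]`. By a theorem of
Huppert, the finite groups with this property are the supersolvable ones. -/
def PrimeCovers (G : Type*) [Group G] : Prop :=
  ∀ ⦃H K : Subgroup G⦄, H ⋖ K → (H.relIndex K).Prime

/-- `G` has a normal `p`-complement: a normal subgroup of order prime to `p` whose index is a power
of `p`. -/
def HasNormalPComplement (p : ℕ) (G : Type*) [Group G] : Prop :=
  ∃ K : Subgroup G, K.Normal ∧ (Nat.card K).Coprime p ∧ ∃ n, K.index = p ^ n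

theorem covBy_map_of_injective {f : G →* G'} (hf : Function.Injective f) {H K : Subgroup G}
    (h : H ⋖ K) : H.map f ⋖ K.map f := by
  refine ⟨(Subgroup.map_lt_map_iff_of_injective hf).2 h.lt, fun X hHX hXK => ?_⟩
  have hX : (X.comap f).map f = X :=
    Subgroup.map_comap_eq_self (hXK.le.trans (Subgroup.map_le_range f K))
  rw [← hX] at hHX hXK
  exact h.2 ((Subgroup.map_lt_map_iff_of_injective hf).1 hHX)
    ((Subgroup.map_lt_map_iff_of_injective hf).1 hXK)

theorem covBy_comap_of_surjective {f : G →* G'} (hf : Function.Surjective f) {H K : Subgroup G'}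
    (h : H ⋖ K) : H.comap f ⋖ K.comap f := by
  refine ⟨(Subgroup.comap_lt_comap_of_surjective hf).2 h.lt, fun X hHX hXK => ?_⟩
  have hX : (X.map f).comap f = X :=
    Subgroup.comap_map_eq_self ((Subgroup.ker_le_comap f H).trans hHX.le)
  rw [← hX] at hHX hXK
  exact h.2 ((Subgroup.comap_lt_comap_of_surjective hf).1 hHX)
    ((Subgroup.comap_lt_comap_of_surjective hf).1 hXK)

theorem PrimeCovers.of_surjective (h : PrimeCovers G) {f : G →* G'} (hf : Function.Surjective f) :
    PrimeCovers G' := fun H K hHK => by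
  rw [← Subgroup.map_comap_eq_self_of_surjective hf K, ← Subgroup.relIndex_comap]
  exact h (covBy_comap_of_surjective hf hHK)

theorem card_quotient_lt [Finite G] {N : Subgroup G} (hN : N ≠ ⊥) :
    Nat.card (G ⧸ N) < Nat.card G := by
  rw [← Subgroup.index_eq_card, ← N.card_mul_index]
  exact lt_mul_left (Nat.pos_of_ne_zero Subgroup.index_ne_zero_of_finite)
    (N.one_lt_card_iff_ne_bot.2 hN)

theorem exists_largest_prime {n : ℕ} (hn : 1 < n) :
    ∃ p, p.Prime ∧ p ∣ n ∧ ∀ q, q.Prime → q ∣ n → q ≤ p := by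
  have hne : n.primeFactors.Nonempty := Nat.nonempty_primeFactors.2 hn
  have hmem := n.primeFactors.max'_mem hne
  exact ⟨_, Nat.prime_of_mem_primeFactors hmem, Nat.dvd_of_mem_primeFactors hmem,
    fun q hq hqn => Finset.le_max' _ _ (Nat.mem_primeFactors.2 ⟨hq, hqn, by omega⟩)⟩

theorem index_modEq_one_of_normalizer_le [Finite G] {p : ℕ} [Fact p.Prime] (P : Sylow p G)
    {M : Subgroup G} (hM : Subgroup.normalizer (P : Set G) ≤ M) : M.index ≡ 1 [MOD p] := by
  have hPM : (P : Subgroup G) ≤ M := Subgroup.le_normalizer.trans hM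
  have index_modEq : (Subgroup.normalizer (P : Set G)).index ≡ 1 [MOD p] := by
    rw [← P.card_eq_index_normalizer]
    exact card_sylow_modEq_one p G
  have relIndex_modEq : (Subgroup.normalizer (P : Set G)).relIndex M ≡ 1 [MOD p] := by
    have hcard := card_sylow_modEq_one p M
    rw [(P.subtype hPM).card_eq_index_normalizer] at hcard
    have heq : (Subgroup.normalizer (P : Set G)).subgroupOf M =
        Subgroup.normalizer (P.subtype hPM : Set M) := Subgroup.subgroupOf_normalizer_eq hPM
    rwa [Subgroup.relIndex, heq]
  rw [← Subgroup.relIndex_mul_index hM] at index_modEq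
  calc M.index = 1 * M.index := (one_mul _).symm
    _ ≡ _ [MOD p] := relIndex_modEq.symm.mul_right _
    _ ≡ 1 [MOD p] := index_modEq

/-- Otherwise the index of a maximal subgroup above the normalizer of the Sylow subgroup would be a
prime divisor of the order congruent to `1` modulo the largest one. -/
theorem PrimeCovers.sylow_normal [Finite G] (h : PrimeCovers G) {p : ℕ} [Fact p.Prime]
    (hp : ∀ q, q.Prime → q ∣ Nat.card G → q ≤ p) (P : Sylow p G) : (P : Subgroup G).Normal := by
  rw [← Subgroup.normalizer_eq_top_iff]
  by_contra hne
  obtain ⟨M, hM, hle⟩ := (eq_top_or_exists_le_coatom _).resolve_left hne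
  have hprime := h hM.covBy_top
  rw [Subgroup.relIndex_top_right] at hprime
  have hmod := index_modEq_one_of_normalizer_le P hle
  rcases (hp _ hprime M.index_dvd_card).eq_or_lt with heq | hlt
  · have hdvd : p ∣ M.index := heq.symm.dvd
    exact (Fact.out : p.Prime).not_dvd_one ((hmod.dvd_iff dvd_rfl).1 hdvd)
  · exact hprime.ne_one (hmod.eq_of_lt_of_lt hlt (Fact.out : p.Prime).one_lt)

theorem HasNormalPComplement.of_quotient [Finite G] {p : ℕ} {N : Subgroup G} [N.Normal]
    (hN : (Nat.card N).Coprime p) (h : HasNormalPComplement p (G ⧸ N)) :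
    HasNormalPComplement p G := by
  obtain ⟨K, hK, hcop, n, hn⟩ := h
  have hsurj := QuotientGroup.mk'_surjective N
  have hindex : (K.comap (QuotientGroup.mk' N)).index = K.index :=
    K.index_comap_of_surjective hsurj
  refine ⟨K.comap (QuotientGroup.mk' N), hK.comap _, ?_, n, hindex.trans hn⟩
  have hcard : Nat.card (K.comap (QuotientGroup.mk' N)) = Nat.card N * Nat.card K := by
    refine Nat.eq_of_mul_eq_mul_right (Nat.pos_of_ne_zero (K.index_ne_zero_of_finite)) ?_
    rw [← hindex, Subgroup.card_mul_index, hindex, mul_assoc, K.card_mul_index,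
      ← Subgroup.index_eq_card, N.card_mul_index]
  rw [hcard]
  exact hN.mul_left hcop

/-- Quotienting by the normal Sylow subgroups for the larger primes one after another leaves a
`q`-group. -/
theorem PrimeCovers.hasNormalPComplement {G : Type*} [Group G] [Finite G] (h : PrimeCovers G)
    {q : ℕ} (hq : q.Prime) (hmin : ∀ p, p.Prime → p ∣ Nat.card G → q ≤ p) :
    HasNormalPComplement q G := by
  rcases subsingleton_or_nontrivial G with _ | _
  · exact ⟨⊤, inferInstance, by simp, 0, by simp⟩
  obtain ⟨p, hp, hpG, hmax⟩ := exists_largest_prime (Finite.one_lt_card (α := G))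
  have : Fact p.Prime := ⟨hp⟩
  rcases (hmin p hp hpG).eq_or_lt with rfl | hlt
  · refine ⟨⊥, inferInstance, by simp, (Nat.card G).primeFactorsList.length, ?_⟩
    rw [Subgroup.index_bot]
    exact Nat.eq_prime_pow_of_unique_prime_dvd Nat.card_pos.ne' fun hd hdG =>
      le_antisymm (hmax _ hd hdG) (hmin _ hd hdG)
  · obtain ⟨P⟩ : Nonempty (Sylow p G) := inferInstance
    have hP := h.sylow_normal hmax P
    have := card_quotient_lt (P.ne_bot_of_dvd_card hpG)
    refine .of_quotient (N := P) ?_ <| PrimeCovers.hasNormalPComplement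
      (h.of_surjective (QuotientGroup.mk'_surjective _)) hq fun r hr hrd =>
        hmin r hr (hrd.trans (Subgroup.card_quotient_dvd_card _))
    obtain ⟨k, hk⟩ := P.2.exists_card_eq
    rw [hk]
    exact ((Nat.coprime_primes hp hq).2 hlt.ne').pow_left k
termination_by Nat.card G

end PrimeCovers

section NormalChains

variable {G : Type*} [Group G]

theorem isModularElement_of_normal (N : Subgroup G) [N.Normal] : IsModularElement N where
  sup_inf_assoc_middle a b hab := by
    refine le_antisymm ?_ (le_inf (sup_le_sup_left inf_le_left a) (sup_le hab inf_le_right))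
    rintro _ ⟨hx, hxb⟩
    obtain ⟨y, hy, z, hz, rfl⟩ := Subgroup.mem_sup_of_normal_right.1 hx
    exact Subgroup.mul_mem_sup hy ⟨hz, (b.mul_mem_cancel_left (hab hy)).1 hxb⟩
  sup_inf_assoc_left a b hb := by
    refine le_antisymm ?_ (le_inf (sup_le_sup_left inf_le_left N) (sup_le hb inf_le_right))
    rintro _ ⟨hx, hxb⟩
    obtain ⟨y, hy, z, hz, rfl⟩ := Subgroup.mem_sup_of_normal_left.1 hx
    exact Subgroup.mul_mem_sup hy ⟨hz, (b.mul_mem_cancel_left (hb hy)).1 hxb⟩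

/-- Both `P` and `K` normalize `K ⊓ N`. -/
theorem normal_inf_of_sup_eq_top {P K N : Subgroup G} [N.Normal]
    (hN : N ≤ Subgroup.centralizer P) (hsup : P ⊔ K = ⊤) : (K ⊓ N).Normal := by
  rw [← Subgroup.normalizer_eq_top_iff, eq_top_iff, ← hsup]
  refine sup_le ?_ ?_
  · exact (Subgroup.le_centralizer_iff.1 (inf_le_right.trans hN)).trans
      (Subgroup.centralizer_le_normalizer _)
  · exact (le_inf Subgroup.le_normalizer Subgroup.le_normalizer_of_normal).trans
      Subgroup.inf_normalizer_le_normalizer_inf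

theorem covBy_sup_of_minimal_normal {P H N : Subgroup G}
    (hmin : Minimal (fun M : Subgroup G => M.Normal ∧ M ≠ ⊥) N)
    (hN : N ≤ Subgroup.centralizer P) (hsup : P ⊔ H = ⊤) (hdisj : Disjoint N H) :
    H ⋖ N ⊔ H := by
  obtain ⟨⟨hnormal, hne⟩, -⟩ := id hmin
  refine covBy_of_eq_or_eq (right_lt_sup.2 fun hle => hne (hdisj.eq_bot_of_le hle))
    fun K hHK hK => ?_
  have hK_eq : K = H ⊔ (N ⊓ K) := by
    rw [← (isModularElement_of_normal N).sup_inf_assoc_middle hHK, sup_comm, inf_eq_right.2 hK]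
  have hnormal_inf : (N ⊓ K).Normal := by
    rw [inf_comm]
    exact normal_inf_of_sup_eq_top hN (top_le_iff.1 (hsup.ge.trans (sup_le_sup_left hHK P)))
  rcases eq_or_ne (N ⊓ K) ⊥ with hbot | hbot
  · exact .inl (by rw [hK_eq, hbot, sup_bot_eq])
  · have hNK : N ≤ N ⊓ K := hmin.2 ⟨hnormal_inf, hbot⟩ inf_le_left
    exact .inr (le_antisymm hK (sup_le (hNK.trans inf_le_right) hHK))

theorem relIndex_sup_eq_card_of_disjoint [Finite G] {N H : Subgroup G} [N.Normal]
    (hdisj : Disjoint N H) : H.relIndex (N ⊔ H) = Nat.card N := by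
  have hmul_H := Subgroup.relIndex_mul_relIndex ⊥ H (N ⊔ H) bot_le le_sup_right
  have hmul_N := Subgroup.relIndex_mul_relIndex ⊥ N (N ⊔ H) bot_le le_sup_left
  rw [Subgroup.relIndex_sup_left, ← Subgroup.inf_relIndex_right N H, hdisj.eq_bot,
    ← hmul_H] at hmul_N
  simp only [Subgroup.relIndex_bot_left, mul_comm (Nat.card N)] at hmul_N
  exact (Nat.eq_of_mul_eq_mul_left Nat.card_pos hmul_N).symm

theorem bot_covBy_of_prime_card {N : Subgroup G} (hN : (Nat.card N).Prime) : ⊥ ⋖ N := by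
  have : Finite N := Nat.finite_of_card_ne_zero hN.ne_zero
  refine covBy_of_eq_or_eq (bot_lt_iff_ne_bot.2 fun hbot => hN.ne_one (by simp [hbot]))
    fun K _ hK => ?_
  exact ((Nat.dvd_prime hN).1 (Subgroup.card_dvd_of_le hK)).imp Subgroup.card_eq_one.1
    fun hcard => Subgroup.eq_of_le_of_card_ge hK hcard.ge

/-- Let `P` be the normal Sylow subgroup for the largest prime, `H` a complement of `P` and `N` a
minimal normal subgroup inside the center of `P`. Then `N ⊔ H` covers `H`, so `|N|` is prime. -/
theorem PrimeCovers.exists_normal_bot_covBy [Finite G] [Nontrivial G] (h : PrimeCovers G) :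
    ∃ N : Subgroup G, ⊥ ⋖ N ∧ N.Normal := by
  obtain ⟨p, hp, hpG, hmax⟩ := exists_largest_prime (Finite.one_lt_card (α := G))
  have : Fact p.Prime := ⟨hp⟩
  obtain ⟨P⟩ : Nonempty (Sylow p G) := inferInstance
  have hP : (P : Subgroup G).Normal := h.sylow_normal hmax P
  obtain ⟨H, hH⟩ := Subgroup.exists_right_complement'_of_coprime P.card_coprime_index
  have : Nontrivial P := (Subgroup.nontrivial_iff_ne_bot _).2 (P.ne_bot_of_dvd_card hpG)
  let Z : Subgroup G := P ⊓ Subgroup.centralizer (P : Subgroup G)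
  have hZ : Z ≠ ⊥ := by
    have := P.2.center_nontrivial
    obtain ⟨⟨z, hz⟩, hz_ne⟩ := exists_ne (1 : Subgroup.center P)
    refine Subgroup.ne_bot_iff_exists_ne_one.2 ⟨⟨z, z.2, fun x hx => ?_⟩, ?_⟩
    · exact congrArg Subtype.val (Subgroup.mem_center_iff.1 hz ⟨x, hx⟩)
    · exact fun hz_one => hz_ne (Subtype.ext (Subtype.ext (Subtype.ext_iff.1 hz_one :)))
  obtain ⟨N, hNZ, hmin⟩ := (Set.toFinite {N : Subgroup G | N.Normal ∧ N ≠ ⊥}).exists_le_minimal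
    (a := Z) ⟨inferInstance, hZ⟩
  have hnormal : N.Normal := hmin.1.1
  have hdisj : Disjoint N H := hH.disjoint.mono_left (hNZ.trans inf_le_left)
  refine ⟨N, bot_covBy_of_prime_card ?_, hnormal⟩
  rw [← relIndex_sup_eq_card_of_disjoint hdisj]
  exact h (covBy_sup_of_minimal_normal hmin (hNZ.trans inf_le_right) hH.sup_eq_top hdisj)

theorem PrimeCovers.exists_normal_covBy [Finite G] (h : PrimeCovers G) {A : Subgroup G}
    (hA : A.Normal) (hne : A ≠ ⊤) : ∃ B : Subgroup G, A ⋖ B ∧ B.Normal := by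
  have : Nontrivial (G ⧸ A) := QuotientGroup.nontrivial_iff.2 hne
  have hsurj := QuotientGroup.mk'_surjective A
  obtain ⟨N, hcov, hN⟩ := (h.of_surjective hsurj).exists_normal_bot_covBy
  refine ⟨N.comap (QuotientGroup.mk' A), ?_, hN.comap _⟩
  have := covBy_comap_of_surjective hsurj hcov
  rwa [MonoidHom.comap_bot, QuotientGroup.ker_mk'] at this

theorem PrimeCovers.isSupersolvableLattice [Finite G] (h : PrimeCovers G) :
    IsSupersolvableLattice (Subgroup G) := by
  obtain ⟨s, hbot, htop, hs⟩ := exists_covBySeries_forall_mem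
    (p := fun N : Subgroup G => N.Normal) (fun _ => h.exists_normal_covBy) (a := ⊥) inferInstance
  refine .of_forall_mem_isModularElement hbot htop fun N hN => ?_
  have := hs N hN
  exact isModularElement_of_normal N

end NormalChains

section Fusion

open scoped Pointwise commutatorElement

variable {G : Type*} [Group G] {q : ℕ}

/-- The hypothesis of Frobenius' normal complement theorem: the normalizer of every nontrivial
`p`-subgroup of `G` has a normal `p`-complement. -/
def HasLocalNormalPComplements (p : ℕ) (G : Type*) [Group G] : Prop :=
  ∀ D : Subgroup G, D ≠ ⊥ → IsPGroup p D → HasNormalPComplement p (Subgroup.normalizer (D : Set G))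

/-- The `q`-complement centralizes `D`, and together with `S` it generates `G`. -/
theorem HasNormalPComplement.centralizer_sup_sylow [Finite G] [Fact q.Prime]
    (h : HasNormalPComplement q G) {D : Subgroup G} [hD : D.Normal] (hDq : IsPGroup q D)
    (S : Sylow q G) : Subgroup.centralizer (D : Set G) ⊔ S = ⊤ := by
  obtain ⟨K, hK, hcop, m, hm⟩ := h
  have hKS : K ⊔ S = ⊤ := by
    have hcop_index : (q ^ m).Coprime (S : Subgroup G).index :=
      .pow_left _ (((Fact.out : q.Prime).coprime_iff_not_dvd).2 S.not_dvd_index)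
    exact Subgroup.index_eq_one.1 <| Nat.eq_one_of_dvd_coprimes hcop_index
      (hm ▸ Subgroup.index_dvd_of_le le_sup_left) (Subgroup.index_dvd_of_le le_sup_right)
  have hdisj : Disjoint K D := by
    obtain ⟨j, hj⟩ := hDq.exists_card_eq
    exact Subgroup.disjoint_of_coprime_natCard (hj ▸ hcop.pow_right j)
  have hcent : K ≤ Subgroup.centralizer (D : Set G) := fun k hk =>
    Subgroup.mem_centralizer_iff.2 fun d hd =>
      (Subgroup.commute_of_normal_of_disjoint K D hK hD hdisj k d hk hd).symm.eq
  exact top_le_iff.1 (hKS.ge.trans (sup_le_sup_right hcent _))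

theorem mem_smul_sylow {R : Sylow q G} {g x : G} : x ∈ g • R ↔ g⁻¹ * x * g ∈ R := by
  change x ∈ MulAut.conj g • (R : Subgroup G) ↔ _
  rw [Subgroup.mem_pointwise_smul_iff_inv_smul_mem, ← map_inv]
  simp only [MulAut.smul_def, MulAut.conj_apply, inv_inv]
  exact Iff.rfl

theorem exists_sylow_of_le_normalizer [Finite G] [Fact q.Prime] {D A B : Subgroup G}
    (h : HasNormalPComplement q (Subgroup.normalizer (D : Set G))) (hD : IsPGroup q D)
    (hA : IsPGroup q A) (hB : IsPGroup q B) (hAN : A ≤ Subgroup.normalizer (D : Set G))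
    (hBN : B ≤ Subgroup.normalizer (D : Set G)) :
    ∃ k ∈ Subgroup.centralizer (D : Set G), ∃ R : Sylow q G, A ≤ R ∧ B ≤ (k • R : Sylow q G) := by
  let N := Subgroup.normalizer (D : Set G)
  have : (D.subgroupOf N).Normal := Subgroup.normal_in_normalizer
  have hsubgroupOf : ∀ X : Subgroup G, IsPGroup q X → IsPGroup q (X.subgroupOf N) := fun X hX =>
    hX.comap_of_injective N.subtype N.subtype_injective
  obtain ⟨S, hAS⟩ := (hsubgroupOf A hA).exists_le_sylow
  obtain ⟨T, hBT⟩ := (hsubgroupOf B hB).exists_le_sylow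
  obtain ⟨n, hn⟩ := MulAction.exists_smul_eq N S T
  have hn_mem : n ∈ Subgroup.centralizer (D.subgroupOf N : Set N) ⊔ S :=
    h.centralizer_sup_sylow (hsubgroupOf D hD) S ▸ Subgroup.mem_top n
  obtain ⟨k, hk, s, hs, rfl⟩ := Subgroup.mem_sup_of_normal_left.1 hn_mem
  rw [mul_smul, Sylow.smul_eq_iff_mem_normalizer.2 (Subgroup.le_normalizer hs)] at hn
  obtain ⟨R, hSR⟩ := (S.2.map N.subtype).exists_le_sylow
  refine ⟨k, Subgroup.mem_centralizer_iff.2 fun d hd => ?_, R, fun a ha => ?_, fun b hb => ?_⟩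
  · exact congrArg Subtype.val
      (Subgroup.mem_centralizer_iff.1 hk ⟨d, Subgroup.le_normalizer hd⟩ hd)
  · exact hSR ⟨⟨a, hAN ha⟩, hAS ha, rfl⟩
  · have hbT : (⟨b, hBN hb⟩ : N) ∈ T := hBT hb
    rw [← hn, mem_smul_sylow] at hbT
    exact mem_smul_sylow.2 (hSR ⟨_, hbT, rfl⟩)

theorem lt_inf_normalizer_of_isPGroup [Finite G] [Fact q.Prime] {D P : Subgroup G}
    (hP : IsPGroup q P) (h : D < P) : D < P ⊓ Subgroup.normalizer (D : Set G) := by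
  refine lt_of_le_of_ne (le_inf h.le Subgroup.le_normalizer) fun heq => ?_
  have := hP.isNilpotent
  have hlt := Group.normalizerCondition_of_isNilpotent (G := P) (D.subgroupOf P)
    (lt_top_iff_ne_top.2 fun htop => h.not_ge (Subgroup.subgroupOf_eq_top.1 htop))
  rw [← Subgroup.subgroupOf_normalizer_eq h.le] at hlt
  obtain ⟨x, hxN, hxD⟩ := SetLike.exists_of_lt hlt
  exact hxD (heq.ge ⟨x.2, hxN⟩)

theorem sylow_inf_lt_left {P Q : Sylow q G} (h : P ≠ Q) : (P ⊓ Q : Subgroup G) < P :=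
  inf_lt_left.2 fun hle => h (Sylow.ext (P.is_maximal' Q.2 hle).symm)

/-- With `D = P ⊓ Q` and `N` its normalizer, there are a Sylow subgroup `R ≥ P ⊓ N` and a `k`
centralizing `D` such that `Q ⊓ N ≤ k • R`. Then `P ⊓ R` and `k • R ⊓ Q` are larger than `D`, which
allows a downward induction on the intersection. -/
theorem HasLocalNormalPComplements.exists_centralizer_smul_eq [Finite G] [Fact q.Prime]
    (h : HasLocalNormalPComplements q G) (P Q : Sylow q G) :
    ∃ g ∈ Subgroup.centralizer ((P ⊓ Q : Subgroup G) : Set G), g • P = Q := by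
  induction hD : (P ⊓ Q : Subgroup G) using WellFoundedGT.induction generalizing P Q with
  | ind D ih =>
  rcases eq_or_ne D ⊥ with rfl | hbot
  · obtain ⟨g, hg⟩ := MulAction.exists_smul_eq G P Q
    exact ⟨g, Subgroup.mem_centralizer_iff.2 (by simp), hg⟩
  rcases eq_or_ne P Q with rfl | hne
  · exact ⟨1, one_mem _, one_smul G P⟩
  have conj_of_lt : ∀ S T : Sylow q G, D < (S ⊓ T : Subgroup G) →
      ∃ g ∈ Subgroup.centralizer (D : Set G), g • S = T := fun S T hlt =>
    have ⟨g, hg, hgST⟩ := ih _ hlt S T rfl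
    ⟨g, Subgroup.centralizer_le hlt.le hg, hgST⟩
  have hDP : D < P := hD ▸ sylow_inf_lt_left hne
  have hDQ : D < Q := by
    rw [← hD, inf_comm]
    exact sylow_inf_lt_left hne.symm
  have hDq : IsPGroup q D := P.2.to_le hDP.le
  obtain ⟨k, hk, R, hPR, hQR⟩ := exists_sylow_of_le_normalizer (h D hbot hDq) hDq
    (P.2.to_le inf_le_left) (Q.2.to_le inf_le_left) inf_le_right inf_le_right
  obtain ⟨a, ha, rfl⟩ := conj_of_lt P R <|
    (lt_inf_normalizer_of_isPGroup P.2 hDP).trans_le (le_inf inf_le_left hPR)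
  obtain ⟨b, hb, rfl⟩ := conj_of_lt (k • a • P) Q <|
    (lt_inf_normalizer_of_isPGroup Q.2 hDQ).trans_le (le_inf hQR inf_le_left)
  exact ⟨b * k * a, mul_mem (mul_mem hb hk) ha, by simp only [mul_smul]⟩

theorem conj_eq_self_of_mem_centralizer {s : Set G} {c x : G} (hc : c ∈ Subgroup.centralizer s)
    (hx : x ∈ s) : c * x * c⁻¹ = x :=
  mul_inv_eq_iff_eq_mul.2 (Subgroup.mem_centralizer_iff.1 hc x hx).symm

theorem exists_mem_conj_eq_of_mem_normalizer [Finite G] [Fact q.Prime] {P : Sylow q G}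
    (h : HasNormalPComplement q (Subgroup.normalizer (P : Set G))) {m x : G}
    (hm : m ∈ Subgroup.normalizer (P : Set G)) (hx : x ∈ P) :
    ∃ u ∈ P, m * x * m⁻¹ = u * x * u⁻¹ := by
  let N := Subgroup.normalizer (P : Set G)
  have hPN : (P : Subgroup G) ≤ N := Subgroup.le_normalizer
  let D : Subgroup N := P.subtype hPN
  have : D.Normal := Subgroup.normal_in_normalizer
  have hm_mem : ⟨m, hm⟩ ∈ Subgroup.centralizer (D : Set N) ⊔ D :=
    h.centralizer_sup_sylow (P.subtype hPN).2 (P.subtype hPN) ▸ Subgroup.mem_top _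
  obtain ⟨k, hk, u, hu, hku⟩ := Subgroup.mem_sup_of_normal_left.1 hm_mem
  have hu_mem : (u : G) ∈ P := hu
  have hux : (u : G) * x * (u : G)⁻¹ ∈ P := mul_mem (mul_mem hu_mem hx) (inv_mem hu_mem)
  refine ⟨u, hu_mem, ?_⟩
  have hku_val : (k * u : G) = m := congrArg Subtype.val hku
  calc m * x * m⁻¹ = (k * u) * x * (k * u : G)⁻¹ := by rw [hku_val]
    _ = k * (u * x * (u : G)⁻¹) * (k : G)⁻¹ := by group
    _ = u * x * (u : G)⁻¹ := congrArg Subtype.val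
      (conj_eq_self_of_mem_centralizer hk (x := (⟨_, hPN hux⟩ : N)) hux)

theorem HasLocalNormalPComplements.exists_mem_conj_eq [Finite G] [Fact q.Prime]
    (h : HasLocalNormalPComplements q G) {P : Sylow q G} (hP : (P : Subgroup G) ≠ ⊥) {g x : G}
    (hx : x ∈ P) (hgx : g * x * g⁻¹ ∈ P) : ∃ u ∈ P, g * x * g⁻¹ = u * x * u⁻¹ := by
  obtain ⟨c, hc, hcP⟩ := h.exists_centralizer_smul_eq (g • P) P
  have hgx_smul : g * x * g⁻¹ ∈ g • P := mem_smul_sylow.2 (by simpa [mul_assoc] using hx)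
  rw [← mul_smul, Sylow.smul_eq_iff_mem_normalizer] at hcP
  obtain ⟨u, hu, heq⟩ := exists_mem_conj_eq_of_mem_normalizer (h P hP P.2) hcP hx
  refine ⟨u, hu, ?_⟩
  rw [← heq, ← conj_eq_self_of_mem_centralizer hc ⟨hgx_smul, hgx⟩]
  group

theorem commutator_inf_le_of_exists_mem_conj_eq [Finite G] [Fact q.Prime] {P : Sylow q G}
    (h : ∀ ⦃g x⦄, x ∈ P → g * x * g⁻¹ ∈ P → ∃ u ∈ P, g * x * g⁻¹ = u * x * u⁻¹) :
    commutator G ⊓ P ≤ ⁅(P : Subgroup G), (P : Subgroup G)⁆ := by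
  rw [Subgroup.commutator_inf_eq_focalSubgroup, Subgroup.focalSubgroup_def, Subgroup.closure_le]
  rintro _ ⟨hcomm, x, hx, g, rfl⟩
  have hconj : g * x⁻¹ * g⁻¹ ∈ P := by
    have hmem : x⁻¹ * ⁅x, g⁆ ∈ P := mul_mem (inv_mem hx) hcomm
    rwa [commutatorElement_def, mul_assoc, mul_assoc, inv_mul_cancel_left, ← mul_assoc] at hmem
  obtain ⟨u, hu, heq⟩ := h (inv_mem hx) hconj
  have : ⁅x, g⁆ = ⁅x, u⁆ := by
    rw [commutatorElement_def, commutatorElement_def, mul_assoc x, mul_assoc x, mul_assoc x,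
      mul_assoc x, heq]
  exact this ▸ Subgroup.commutator_mem_commutator hx hu

theorem commutator_lt_of_isPGroup [Finite G] [Fact q.Prime] {P : Subgroup G} (hP : IsPGroup q P)
    (hne : P ≠ ⊥) : ⁅P, P⁆ < P := by
  have := hP.isNilpotent
  have := (Subgroup.nontrivial_iff_ne_bot P).2 hne
  have hlt := Subgroup.map_subtype_lt_map_subtype.2
    (Group.IsSolvable.commutator_lt_top_of_nontrivial P)
  rwa [Subgroup.map_subtype_commutator, ← MonoidHom.range_eq_map, Subgroup.range_subtype] at hlt

theorem HasLocalNormalPComplements.commutator_ne_top [Finite G] [Fact q.Prime]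
    (h : HasLocalNormalPComplements q G) (hq : q ∣ Nat.card G) : commutator G ≠ ⊤ := by
  intro htop
  obtain ⟨P⟩ : Nonempty (Sylow q G) := inferInstance
  have hP : (P : Subgroup G) ≠ ⊥ := P.ne_bot_of_dvd_card hq
  have hle : (P : Subgroup G) ≤ ⁅(P : Subgroup G), (P : Subgroup G)⁆ := by
    simpa [htop] using
      commutator_inf_le_of_exists_mem_conj_eq fun _ _ => h.exists_mem_conj_eq (P := P) hP
  exact (commutator_lt_of_isPGroup P.2 hP).not_ge hle

theorem isSolvable_of_forall_hasNormalPComplement [Finite G] [IsSimpleGroup G] [Fact q.Prime]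
    (hq : q ∣ Nat.card G) (h : ∀ H : Subgroup G, H ≠ ⊤ → HasNormalPComplement q H) :
    Group.IsSolvable G := by
  by_cases hpgroup : IsPGroup q G
  · have := hpgroup.isNilpotent
    infer_instance
  have hloc : HasLocalNormalPComplements q G := by
    refine fun D hD hDq => h _ fun hN => hpgroup ?_
    rw [Subgroup.normalizer_eq_top_iff] at hN
    rw [hN.eq_bot_or_eq_top.resolve_left hD] at hDq
    exact hDq.of_equiv Subgroup.topEquiv
  have hbot : commutator G = ⊥ :=
    (Subgroup.Normal.eq_bot_or_eq_top inferInstance).resolve_right (hloc.commutator_ne_top hq)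
  have hcenter := (commutator_eq_bot_iff_center_eq_top G).1 hbot
  exact Group.isSolvable_of_comm fun a b =>
    Subgroup.mem_center_iff.1 (hcenter ▸ Subgroup.mem_top b) a

end Fusion

section Catenarian

open ArithmeticFunction

variable {G : Type*} [Group G]

theorem isSimpleGroup_quotient_of_isCoatom {M : Subgroup G} [M.Normal] (hM : IsCoatom M) :
    IsSimpleGroup (G ⧸ M) where
  exists_pair_ne := (QuotientGroup.nontrivial_iff.2 hM.1).exists_pair_ne
  eq_bot_or_eq_top_of_normal H _ := by
    have hsurj := QuotientGroup.mk'_surjective M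
    refine (hM.le_iff.1 (QuotientGroup.le_comap_mk' M H)).symm.imp (fun h => ?_) fun h => ?_
    · rw [← Subgroup.map_comap_eq_self_of_surjective hsurj H, h, QuotientGroup.map_mk'_self]
    · rw [← Subgroup.map_comap_eq_self_of_surjective hsurj H, h,
        Subgroup.map_top_of_surjective _ hsurj]

variable [Finite G]

theorem isCatenarianFromTo_subgroup (h : IsCatenarianFromTo (⊥ : Subgroup G) ⊤)
    (H : Subgroup G) : IsCatenarianFromTo (⊥ : Subgroup H) ⊤ :=
  .of_map (fun _ _ => covBy_map_of_injective H.subtype_injective)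
    (h.subinterval bot_le le_top)

theorem isCatenarianFromTo_quotient (h : IsCatenarianFromTo (⊥ : Subgroup G) ⊤)
    (N : Subgroup G) [N.Normal] : IsCatenarianFromTo (⊥ : Subgroup (G ⧸ N)) ⊤ :=
  .of_map (fun _ _ => covBy_comap_of_surjective (QuotientGroup.mk'_surjective N))
    (h.subinterval bot_le le_top)

theorem exists_isCoatom_prime_index [Group.IsSolvable G] [Nontrivial G] :
    ∃ M : Subgroup G, IsCoatom M ∧ M.index.Prime := by
  obtain ⟨M, hM, hle⟩ := (eq_top_or_exists_le_coatom (commutator G)).resolve_left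
    (Group.IsSolvable.commutator_lt_top_of_nontrivial G).ne
  have : M.Normal := Subgroup.Normal.of_commutator_le G hle
  have : IsMulCommutative (G ⧸ M) :=
    Subgroup.Normal.quotient_commutative_iff_commutator_le.2 hle
  exact ⟨M, hM, Group.is_simple_iff_prime_card.1 (isSimpleGroup_quotient_of_isCoatom hM)⟩

theorem card_lt_of_ne_top {H : Subgroup G} (hH : H ≠ ⊤) : Nat.card H < Nat.card G :=
  H.card_le_card_group.lt_of_ne fun heq => hH (H.eq_top_of_card_eq heq)

theorem exists_covBySeries_length_eq_cardFactors {G : Type*} [Group G] [Finite G]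
    [Group.IsSolvable G] : ∃ s : CovBySeries (Subgroup G),
      s.head = ⊥ ∧ s.last = ⊤ ∧ s.length = cardFactors (Nat.card G) := by
  rcases subsingleton_or_nontrivial G with _ | _
  · exact ⟨RelSeries.singleton _ ⊥, rfl, Subsingleton.elim _ _, by simp⟩
  obtain ⟨M, hM, hindex⟩ := exists_isCoatom_prime_index (G := G)
  have := card_lt_of_ne_top hM.1
  obtain ⟨s, hbot, htop, hlen⟩ := exists_covBySeries_length_eq_cardFactors (G := M)
  let t : CovBySeries (Subgroup G) :=
    s.map ⟨Subgroup.map M.subtype, fun h => covBy_map_of_injective M.subtype_injective h⟩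
  have ht : t.last = M := by
    rw [RelSeries.last_map, htop]
    exact (MonoidHom.range_eq_map _).symm.trans M.range_subtype
  refine ⟨t.snoc ⊤ (ht ▸ hM.covBy_top), ?_, RelSeries.last_snoc .., ?_⟩
  · rw [RelSeries.head_snoc, RelSeries.head_map, hbot]
    exact Subgroup.map_bot _
  · rw [RelSeries.snoc_length, ← M.card_mul_index,
      cardFactors_mul Nat.card_pos.ne' hindex.ne_zero, cardFactors_eq_one_iff_prime.2 hindex,
      ← hlen]
    rfl
termination_by Nat.card G

theorem cardFactors_card_eq_add {H K : Subgroup G} (h : H ≤ K) :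
    cardFactors (Nat.card K) = cardFactors (Nat.card H) + cardFactors (H.relIndex K) := by
  have hindex : H.relIndex K ≠ 0 := Subgroup.index_ne_zero_of_finite
  rw [← cardFactors_mul Nat.card_pos.ne' hindex, ← Subgroup.relIndex_bot_left H,
    Subgroup.relIndex_mul_relIndex _ _ _ bot_le h, Subgroup.relIndex_bot_left]

theorem strictMono_cardFactors_card :
    StrictMono fun H : Subgroup G => cardFactors (Nat.card H) := fun H K h => by
  have hindex : 1 < H.relIndex K :=
    Nat.one_lt_iff_ne_zero_and_ne_one.2 ⟨Subgroup.index_ne_zero_of_finite,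
      fun h_one => h.not_ge (Subgroup.relIndex_eq_one.1 h_one)⟩
  have hpos := cardFactors_pos_iff_one_lt.2 hindex
  have hadd := cardFactors_card_eq_add h.le
  lia

/-- Solvability provides one saturated chain of length `Ω |G|`, the largest conceivable one. -/
theorem PrimeCovers.of_isCatenarianFromTo [Group.IsSolvable G]
    (h : IsCatenarianFromTo (⊥ : Subgroup G) ⊤) : PrimeCovers G := by
  obtain ⟨s, hbot, htop, hs⟩ := exists_covBySeries_length_eq_cardFactors (G := G)
  intro H K hHK
  have hstep := h.eq_add_one_of_covBy strictMono_cardFactors_card hbot htop (by simp [hs]) hHK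
  rw [cardFactors_card_eq_add hHK.le] at hstep
  exact cardFactors_eq_one_iff_prime.1 (by omega)

/-- In a simple group apply the induction hypothesis to the proper subgroups and use the smallest
prime divisor of the order. -/
theorem isSolvable_of_isCatenarianFromTo {G : Type*} [Group G] [Finite G]
    (h : IsCatenarianFromTo (⊥ : Subgroup G) ⊤) : Group.IsSolvable G := by
  have isSolvable_subgroup (H : Subgroup G) (hH : H ≠ ⊤) : Group.IsSolvable H :=
    have := card_lt_of_ne_top hH
    isSolvable_of_isCatenarianFromTo (isCatenarianFromTo_subgroup h H)
  by_cases hsimple : IsSimpleGroup G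
  · have hq : (Nat.card G).minFac.Prime := Nat.minFac_prime Finite.one_lt_card.ne'
    have : Fact (Nat.card G).minFac.Prime := ⟨hq⟩
    refine isSolvable_of_forall_hasNormalPComplement (Nat.minFac_dvd _) fun H hH => ?_
    have := isSolvable_subgroup H hH
    exact (PrimeCovers.of_isCatenarianFromTo (isCatenarianFromTo_subgroup h H)).hasNormalPComplement
      hq fun p hp hpH => Nat.minFac_le_of_dvd hp.two_le (hpH.trans H.card_subgroup_dvd_card)
  rcases subsingleton_or_nontrivial G with _ | _
  · infer_instance
  obtain ⟨N, hN, hbot, htop⟩ : ∃ N : Subgroup G, N.Normal ∧ N ≠ ⊥ ∧ N ≠ ⊤ := by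
    by_contra! hc
    exact hsimple ⟨fun N hN => or_iff_not_imp_left.2 (hc N hN)⟩
  have := card_quotient_lt hbot
  have isSolvable_quotient := isSolvable_of_isCatenarianFromTo (isCatenarianFromTo_quotient h N)
  exact (Group.isSolvable_iff_subgroup_quotient N).2
    ⟨isSolvable_subgroup N htop, isSolvable_quotient⟩
termination_by Nat.card G

theorem isCatenarianFromTo_iff_isSupersolvableLattice_subgroup :
    IsCatenarianFromTo (⊥ : Subgroup G) ⊤ ↔ IsSupersolvableLattice (Subgroup G) := by
  refine ⟨fun h => ?_, fun h => h.isCatenarianFromTo⟩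
  have := isSolvable_of_isCatenarianFromTo h
  exact (PrimeCovers.of_isCatenarianFromTo h).isSupersolvableLattice

end Catenarian

/-- A finite Galois field extension `k ⊂ L` is catenarian iff the
lattice `[k,L]` of intermediate fields is supersolvable. -/
theorem stmt_19 {k L : Type*} [Field k] [Field L] [Algebra k L]
    [FiniteDimensional k L] [IsGalois k L] :
    IsCatenarianFromTo (⊥ : IntermediateField k L) ⊤ ↔
      IsSupersolvableLattice (IntermediateField k L) := by
  let e : IntermediateField k L ≃o (Subgroup Gal(L/k))ᵒᵈ := IsGalois.intermediateFieldEquivSubgroup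
  calc IsCatenarianFromTo (⊥ : IntermediateField k L) ⊤
    _ ↔ IsCatenarianFromTo (⊥ : Subgroup Gal(L/k)) ⊤ := isCatenarianFromTo_bot_top_iff_of_dual e
    _ ↔ IsSupersolvableLattice (Subgroup Gal(L/k)) :=
      isCatenarianFromTo_iff_isSupersolvableLattice_subgroup
    _ ↔ IsSupersolvableLattice (IntermediateField k L) :=
      (isSupersolvableLattice_iff_of_dual e).symm
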